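/- Let r, s, t be positive integers, let X be the volume random variable on PP(r,s,t) equipped with the uniform probability distribution, let μ be its mean and σ² its variance. Then (σ/μ)² = (1/3)(1/(st) + 1/(rt) + 1/(rs)). -/

import Mathlib

/-!
The volume generating function of `PP r s t` is computed by MacMahon's box formula, and the variance
is read off from it as a second logarithmic derivative at `q = 1`.

A plane partition in an `(r,s,t)`-box is the same as a strict Gelfand–Tsetlin pattern with top row
`l = (0, …, s-1, s+t, …, s+t+r-1)`: the entries not forced by `l` form an `r × s` rectangle, and the
sum of all entries is the volume plus a constant (`gtGF_topRow`). For an arbitrary top row `l` of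
length `n`, the generating function of these patterns, times a factor depending only on `n`, is the
Vandermonde determinant of the `q ^ l i` (`gtGF_mul_gtConst`).

The second cumulant `f ↦ (q d/dq)² log f` at `q = 1` is additive on products, vanishes on powers of
`q`, equals `(k² - 1)/12` on `1 + q + ⋯ + q^(k-1)`, and equals the variance on a generating function.
Comparing the top rows for `t` and for `0`, where the volume is identically zero, gives
`σ² = (1/12) ∑_{i<j} ((l_j - l_i)² - (j - i)²) = rst(r+s+t)/12` (`varPP_eq`). The mean is `rst/2`
because taking the complement in the box is an involution (`meanPP_eq`).
-/

open Finset

/-- Plane partitions fitting inside an `(r,s,t)`-box. -/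
def PP (r s t : ℕ) : Finset (Fin r → Fin s → Fin (t + 1)) :=
  Finset.univ.filter fun p =>
    ∀ i i' : Fin r, ∀ j j' : Fin s, i ≤ i' → j ≤ j' → (p i' j' : ℕ) ≤ (p i j : ℕ)

/-- The volume of a plane partition. -/
def vol {r s t : ℕ} (p : Fin r → Fin s → Fin (t + 1)) : ℕ :=
  ∑ i, ∑ j, (p i j : ℕ)

/-- The mean volume for the uniform distribution on `PP(r,s,t)`. -/
noncomputable def meanPP (r s t : ℕ) : ℝ :=
  (∑ p ∈ PP r s t, (vol p : ℝ)) / ((PP r s t).card : ℝ)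

/-- The variance of the volume for the uniform distribution on `PP(r,s,t)`. -/
noncomputable def varPP (r s t : ℕ) : ℝ :=
  (∑ p ∈ PP r s t, ((vol p : ℝ) - meanPP r s t) ^ 2) / ((PP r s t).card : ℝ)

open Polynomial

/-! ### Gelfand–Tsetlin patterns and their generating function -/

/-- The array whose row `0` is `m` and whose later rows are those of `g`. -/
def rowCons (m : ℕ → ℕ) (g : ℕ → ℕ → ℕ) : ℕ → ℕ → ℕ
  | 0 => m
  | d + 1 => g d

/-- A row of length `n`, extended by zero to all of `ℕ`. -/
def extendRow (n : ℕ) (m : Fin n → ℕ) : ℕ → ℕ := fun i => if h : i < n then m ⟨i, h⟩ else 0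

open Classical in
/-- The rows `m` of length `n` (zero beyond) that interlace `l`: `l i ≤ m i < l (i + 1)`. -/
noncomputable def rows (n : ℕ) (l : ℕ → ℕ) : Finset (ℕ → ℕ) :=
  (Fintype.piFinset fun i : Fin n => Ico (l i) (l (i + 1))).image (extendRow n)

open Classical in
/-- Strict Gelfand–Tsetlin patterns with top row `l` of length `n`. The top row itself is not
recorded: row `d` of a pattern has length `n - 1 - d`, is zero beyond, and interlaces the row
above it. See `mem_gts` for the explicit description. -/
noncomputable def gts : ℕ → (ℕ → ℕ) → Finset (ℕ → ℕ → ℕ)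
  | 0, _ => {0}
  | n + 1, l => (rows n l).biUnion fun m => (gts n m).image (rowCons m)

/-- The sum of the entries of a pattern with top row of length `n`, the top row excluded. -/
def wt (n : ℕ) (g : ℕ → ℕ → ℕ) : ℕ := ∑ d ∈ range n, ∑ i ∈ range (n - 1 - d), g d i

lemma extendRow_injective (n : ℕ) : Function.Injective (extendRow n) := by
  intro a b h
  funext i
  have := congrFun h i
  simpa [extendRow] using this

lemma mem_rows {n : ℕ} {l m : ℕ → ℕ} :
    m ∈ rows n l ↔ (∀ i < n, l i ≤ m i ∧ m i < l (i + 1)) ∧ ∀ i, n ≤ i → m i = 0 := by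
  simp only [rows, mem_image, Fintype.mem_piFinset, mem_Ico]
  constructor
  · rintro ⟨a, ha, rfl⟩
    refine ⟨fun i hi => ?_, fun i hi => ?_⟩
    · simpa [extendRow, hi] using ha ⟨i, hi⟩
    · simp [extendRow, hi]
  · rintro ⟨h1, h2⟩
    refine ⟨fun i => m i, fun i => h1 i i.2, ?_⟩
    funext i
    by_cases hi : i < n
    · simp [extendRow, hi]
    · simp [extendRow, hi, h2 i (by omega)]

lemma rowCons_eta (g : ℕ → ℕ → ℕ) : rowCons (g 0) (fun d => g (d + 1)) = g := by
  funext d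
  cases d <;> rfl

lemma rowCons_inj {m m' : ℕ → ℕ} {g g' : ℕ → ℕ → ℕ} :
    rowCons m g = rowCons m' g' ↔ m = m' ∧ g = g' := by
  constructor
  · intro h
    exact ⟨congrFun h 0, funext fun d => congrFun h (d + 1)⟩
  · rintro ⟨rfl, rfl⟩; rfl

lemma mem_gts {n : ℕ} {l : ℕ → ℕ} {g : ℕ → ℕ → ℕ} :
    g ∈ gts n l ↔
      (∀ d i, d + i + 1 < n → rowCons l g d i ≤ g d i ∧ g d i < rowCons l g d (i + 1)) ∧
      ∀ d i, n ≤ d + i + 1 → g d i = 0 := by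
  induction n generalizing l g with
  | zero =>
    simp only [gts, mem_singleton]
    constructor
    · rintro rfl; simp
    · rintro ⟨-, h⟩
      funext d i
      exact h d i (by omega)
  | succ n ih =>
    simp only [gts, mem_biUnion, mem_image, mem_rows]
    constructor
    · rintro ⟨m, ⟨h1, h2⟩, g, hg, rfl⟩
      obtain ⟨h3, h4⟩ := ih.1 hg
      refine ⟨fun d i h => ?_, fun d i h => ?_⟩
      · cases d with
        | zero => exact h1 i (by omega)
        | succ d => exact h3 d i (by omega)
      · cases d with
        | zero => exact h2 i (by omega)
        | succ d => exact h4 d i (by omega)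
    · rintro ⟨h1, h2⟩
      refine ⟨g 0, ⟨fun i hi => h1 0 i (by omega), fun i hi => h2 0 i (by omega)⟩,
        fun d => g (d + 1), ih.2 ⟨fun d i h => ?_, fun d i h => h2 (d + 1) i (by omega)⟩,
        rowCons_eta g⟩
      rw [rowCons_eta]
      exact h1 (d + 1) i (by omega)

lemma wt_rowCons (n : ℕ) (m : ℕ → ℕ) (g : ℕ → ℕ → ℕ) :
    wt (n + 1) (rowCons m g) = (∑ i ∈ range n, m i) + wt n g := by
  unfold wt
  rw [sum_range_succ', add_comm]
  congr 1
  refine sum_congr rfl fun d _ => ?_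
  rw [show n + 1 - 1 - (d + 1) = n - 1 - d by omega]
  rfl

/-- The generating function of Gelfand–Tsetlin patterns by the sum of their entries. -/
noncomputable def gtGF (n : ℕ) (l : ℕ → ℕ) : ℝ[X] := ∑ g ∈ gts n l, X ^ wt n g

lemma gtGF_succ (n : ℕ) (l : ℕ → ℕ) :
    gtGF (n + 1) l = ∑ m ∈ Fintype.piFinset fun i : Fin n => Ico (l i) (l (i + 1)),
      (∏ i, X ^ m i) * gtGF n (extendRow n m) := by
  classical
  unfold gtGF
  rw [gts, sum_biUnion, rows, sum_image (fun a _ b _ h => extendRow_injective n h)]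
  · refine sum_congr rfl fun m _ => ?_
    rw [sum_image (fun a _ b _ h => (rowCons_inj.1 h).2), mul_sum]
    refine sum_congr rfl fun g _ => ?_
    rw [wt_rowCons, pow_add, prod_pow_eq_pow_sum, sum_range]
    simp [extendRow]
  · intro m _ m' _ hne
    simp only [Function.onFun, disjoint_left, mem_image]
    rintro _ ⟨g, _, rfl⟩ ⟨g', _, h⟩
    exact hne (rowCons_inj.1 h).1.symm

/-- Subtracting from each row of a Vandermonde matrix the row above it turns the first column into
`(1, 0, …, 0)`, which reduces the size of the determinant by one. -/
lemma det_vandermonde_succ_rows {R : Type*} [CommRing R] (n : ℕ) (v : Fin (n + 1) → R) :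
    (Matrix.vandermonde v).det =
      (Matrix.of fun i j : Fin n => v i.succ ^ ((j : ℕ) + 1) - v i.castSucc ^ ((j : ℕ) + 1)).det := by
  rw [Matrix.det_eq_of_forall_row_eq_smul_add_pred (A := Matrix.vandermonde v)
    (B := Matrix.of (Fin.cons (Matrix.vandermonde v 0) fun i j =>
      v i.succ ^ (j : ℕ) - v i.castSucc ^ (j : ℕ))) (fun _ => 1)]
  · rw [Matrix.det_succ_column_zero, Fin.sum_univ_succ]
    simp [Matrix.vandermonde]
    congr 1
  · intro j; simp
  · intro i j; simp [Matrix.vandermonde]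

/-- The denominator `∏ (X ^ j - 1)` relating `gtGF n l` to a Vandermonde determinant; it does not
depend on the top row `l`. -/
noncomputable def gtConst : ℕ → ℝ[X]
  | 0 => 1
  | n + 1 => gtConst n * ∏ j : Fin n, (X ^ ((j : ℕ) + 1) - 1)

lemma sum_Ico_mul (a b k : ℕ) (h : a ≤ b) :
    (X ^ k - 1) * (∑ m ∈ Ico a b, (X ^ m) ^ k : ℝ[X]) = (X ^ b) ^ k - (X ^ a) ^ k := by
  have := geom_sum_Ico_mul (X ^ k : ℝ[X]) h
  rw [mul_comm]
  simpa [← pow_mul, mul_comm] using this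

/-- The principal specialization of the Weyl character formula. In the induction, the sum over the
second row `m` is a sum over a product of intervals, so by multilinearity of the determinant it can
be taken inside the Vandermonde determinant of the `X ^ m i`, row by row; there it becomes a
geometric sum over `Ico (l i) (l (i + 1))`, which telescopes. -/
theorem gtGF_mul_gtConst (n : ℕ) (l : ℕ → ℕ) (hl : ∀ i, i + 1 < n → l i ≤ l (i + 1)) :
    gtGF n l * gtConst n = (Matrix.vandermonde fun i : Fin n => (X : ℝ[X]) ^ l i).det := by
  induction n generalizing l with
  | zero => simp [gtGF, gtConst, gts, wt]
  | succ n ih =>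
    have h1 : ∀ m ∈ Fintype.piFinset fun i : Fin n => Ico (l i) (l (i + 1)),
        (∏ i, X ^ m i) * gtGF n (extendRow n m) * gtConst n =
          (Matrix.of fun i j : Fin n => ((X : ℝ[X]) ^ m i) ^ ((j : ℕ) + 1)).det := by
      intro m hm
      classical
      have hm' := (mem_rows.1 (show extendRow n m ∈ rows n l from mem_image.2 ⟨m, hm, rfl⟩)).1
      rw [mul_assoc, ih]
      · rw [← Matrix.det_mul_column]
        congr 1
        ext1 i j
        simp [extendRow, Matrix.vandermonde, pow_succ']
      · intro i hi
        exact ((hm' i (by omega)).2.le).trans (hm' (i + 1) hi).1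
    have h2 := (Matrix.detRowAlternating (n := Fin n) (R := ℝ[X])).toMultilinearMap.map_sum_finset
      (fun (i : Fin n) (m : ℕ) (j : Fin n) => ((X : ℝ[X]) ^ m) ^ ((j : ℕ) + 1))
      (fun i => Ico (l i) (l (i + 1)))
    rw [gtConst, ← mul_assoc, gtGF_succ, sum_mul, sum_congr rfl h1, det_vandermonde_succ_rows]
    have h3 : (∑ m ∈ Fintype.piFinset fun i : Fin n => Ico (l i) (l (i + 1)),
        (Matrix.of fun i j : Fin n => ((X : ℝ[X]) ^ m i) ^ ((j : ℕ) + 1)).det) =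
        (Matrix.of fun i j : Fin n =>
          ∑ m ∈ Ico (l i) (l (i + 1)), ((X : ℝ[X]) ^ m) ^ ((j : ℕ) + 1)).det := by
      refine h2.symm.trans ?_
      change Matrix.det _ = _
      congr 1
      ext1 i j
      simp
    rw [h3, mul_comm, ← Matrix.det_mul_row]
    congr 1
    ext1 i j
    exact sum_Ico_mul _ _ _ (hl i (by omega))

/-! ### The second cumulant at `1` -/

/-- The operator `X · d/dX`, which multiplies `X ^ k` by `k`. -/
noncomputable def theta (p : ℝ[X]) : ℝ[X] := X * derivative p

/-- The second cumulant of a polynomial at `1`. If the polynomial is `∑ p ∈ S, X ^ f p`, this is the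
variance of `f` under the uniform distribution on `S`. -/
noncomputable def cumulant (p : ℝ[X]) : ℝ :=
  eval 1 (theta (theta p)) / eval 1 p - (eval 1 (theta p) / eval 1 p) ^ 2

lemma cumulant_mul {p q : ℝ[X]} (hp : eval 1 p ≠ 0) (hq : eval 1 q ≠ 0) :
    cumulant (p * q) = cumulant p + cumulant q := by
  simp only [cumulant, theta, derivative_mul, derivative_X, derivative_add, eval_mul, eval_add,
    eval_X, eval_one]
  field_simp
  ring

lemma cumulant_sum {ι : Type*} (S : Finset ι) (f : ι → ℕ) :
    cumulant (∑ p ∈ S, X ^ f p) =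
      (∑ p ∈ S, (f p : ℝ) ^ 2) / (S.card : ℝ) - ((∑ p ∈ S, (f p : ℝ)) / (S.card : ℝ)) ^ 2 := by
  have hX : ∀ (c : ℝ) (k : ℕ), theta (C c * X ^ k) = C (c * k) * X ^ k := by
    intro c k
    cases k with
    | zero => simp [theta]
    | succ k =>
      simp only [theta, derivative_C_mul, derivative_X_pow, C_mul, Nat.add_sub_cancel]
      simp only [map_natCast]
      ring
  have hs : ∀ c : ι → ℝ, theta (∑ p ∈ S, C (c p) * X ^ f p) =
      ∑ p ∈ S, C (c p * f p) * X ^ f p := by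
    intro c
    rw [← sum_congr rfl fun p _ => hX (c p) (f p)]
    simp [theta, mul_sum]
  have h0 : (∑ p ∈ S, X ^ f p : ℝ[X]) = ∑ p ∈ S, C ((fun _ => (1 : ℝ)) p) * X ^ f p := by simp
  rw [cumulant, h0, hs, hs]
  simp [eval_finsetSum, sq]

lemma cumulant_X_pow (k : ℕ) : cumulant (X ^ k) = 0 := by
  have := cumulant_sum ({()} : Finset Unit) fun _ => k
  simpa using this

lemma cumulant_one : cumulant 1 = 0 := by simpa using cumulant_X_pow 0

lemma cumulant_prod {ι : Type*} (S : Finset ι) (f : ι → ℝ[X]) (h : ∀ i ∈ S, eval 1 (f i) ≠ 0) :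
    cumulant (∏ i ∈ S, f i) = ∑ i ∈ S, cumulant (f i) := by
  classical
  induction S using Finset.induction_on with
  | empty => simp [cumulant_one]
  | insert a S ha ih =>
    rw [prod_insert ha, sum_insert ha, cumulant_mul (h a (by simp)), ih fun i hi => h i (by simp [hi])]
    rw [eval_prod, prod_ne_zero_iff]
    exact fun i hi => h i (by simp [hi])

/-- The variance of the uniform distribution on `{0, …, k - 1}`. -/
lemma cumulant_geom (k : ℕ) (hk : 0 < k) :
    cumulant (∑ i ∈ range k, X ^ i) = ((k : ℝ) ^ 2 - 1) / 12 := by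
  have h1 : ∀ k : ℕ, (∑ i ∈ range k, (i : ℝ)) = k * (k - 1) / 2 := by
    intro k
    induction k with
    | zero => simp
    | succ k ih => rw [sum_range_succ, ih]; push_cast; ring
  have h2 : ∀ k : ℕ, (∑ i ∈ range k, (i : ℝ) ^ 2) = k * (k - 1) * (2 * k - 1) / 6 := by
    intro k
    induction k with
    | zero => simp
    | succ k ih => rw [sum_range_succ, ih]; push_cast; ring
  have hk' : (k : ℝ) ≠ 0 := by positivity
  rw [cumulant_sum (range k) fun i => i, h1, h2, card_range]
  field_simp
  ring

/-- The Vandermonde product of the `X ^ l i` with one factor `X - 1` removed from each difference, so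
that it no longer vanishes at `1`. -/
noncomputable def reducedVandermonde (n : ℕ) (l : ℕ → ℕ) : ℝ[X] :=
  ∏ i : Fin n, ∏ j ∈ Ioi i, (X ^ l i * ∑ k ∈ range (l j - l i), X ^ k)

lemma det_vandermonde_eq_reduced (n : ℕ) (l : ℕ → ℕ) (hl : StrictMono l) :
    (Matrix.vandermonde fun i : Fin n => (X : ℝ[X]) ^ l i).det =
      (∏ i : Fin n, ∏ _j ∈ Ioi i, (X - 1)) * reducedVandermonde n l := by
  rw [Matrix.det_vandermonde, reducedVandermonde, ← prod_mul_distrib]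
  refine prod_congr rfl fun i _ => ?_
  rw [← prod_mul_distrib]
  refine prod_congr rfl fun j hj => ?_
  have h : l i < l j := hl (Fin.lt_def.1 (mem_Ioi.1 hj))
  have := geom_sum_mul (X : ℝ[X]) (l j - l i)
  calc (X : ℝ[X]) ^ l j - X ^ l i = X ^ l i * (X ^ (l j - l i) - 1) := by
        rw [mul_sub, ← pow_add, Nat.add_sub_cancel' h.le, mul_one]
    _ = _ := by rw [← this]; ring

lemma eval_factor_ne_zero {a b : ℕ} (h : a < b) :
    eval 1 (X ^ a * ∑ k ∈ range (b - a), X ^ k : ℝ[X]) ≠ 0 := by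
  simp [eval_finsetSum, Nat.sub_eq_zero_iff_le, h]

lemma eval_reducedVandermonde_ne_zero (n : ℕ) (l : ℕ → ℕ) (hl : StrictMono l) :
    eval 1 (reducedVandermonde n l) ≠ 0 := by
  simp only [reducedVandermonde, eval_prod, prod_ne_zero_iff]
  exact fun i _ j hj => eval_factor_ne_zero (hl (Fin.lt_def.1 (mem_Ioi.1 hj)))

lemma sum_sum_Ioi_sq (n : ℕ) (x : Fin n → ℝ) :
    ∑ i, ∑ j ∈ Ioi i, (x j - x i) ^ 2 = n * ∑ i, x i ^ 2 - (∑ i, x i) ^ 2 := by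
  have h1 := sum_sum_Ioi_add_eq_sum_sum_off_diag fun i j => (x j - x i) ^ 2
  have h2 : ∀ i, ∑ j ∈ ({i}ᶜ : Finset (Fin n)), (x i - x j) ^ 2 = ∑ j, (x i - x j) ^ 2 := by
    intro i
    rw [← sum_compl_add_sum {i}]
    simp
  have h3 : ∑ i, ∑ j, (x i - x j) ^ 2 = 2 * (n * ∑ i, x i ^ 2 - (∑ i, x i) ^ 2) := by
    simp only [sub_sq, sum_add_distrib, sum_sub_distrib, ← mul_sum, ← sum_mul, sum_const, card_univ,
      Fintype.card_fin, nsmul_eq_mul, mul_assoc]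
    ring
  simp only [h2, h3] at h1
  have h4 : ∑ i, ∑ j ∈ Ioi i, ((x i - x j) ^ 2 + (x j - x i) ^ 2) =
      2 * ∑ i, ∑ j ∈ Ioi i, (x j - x i) ^ 2 := by
    simp only [mul_sum]
    refine sum_congr rfl fun i _ => sum_congr rfl fun j _ => by ring
  linarith

lemma cumulant_reducedVandermonde (n : ℕ) (l : ℕ → ℕ) (hl : StrictMono l) :
    cumulant (reducedVandermonde n l) =
      (n * ∑ i ∈ range n, (l i : ℝ) ^ 2 - (∑ i ∈ range n, (l i : ℝ)) ^ 2) / 12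
        - (∑ i : Fin n, ∑ _j ∈ Ioi i, (1 : ℝ)) / 12 := by
  have hf : ∀ i : Fin n, ∀ j ∈ Ioi i,
      eval 1 (X ^ l i * ∑ k ∈ range (l j - l i), X ^ k : ℝ[X]) ≠ 0 :=
    fun i j hj => eval_factor_ne_zero (hl (Fin.lt_def.1 (mem_Ioi.1 hj)))
  rw [sum_range, sum_range, ← sum_sum_Ioi_sq n fun i => (l i : ℝ), ← sub_div, ← sum_sub_distrib,
    sum_div, reducedVandermonde, cumulant_prod]
  · refine sum_congr rfl fun i _ => ?_
    rw [← sum_sub_distrib, sum_div, cumulant_prod _ _ (hf i)]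
    refine sum_congr rfl fun j hj => ?_
    have h : l i < l j := hl (Fin.lt_def.1 (mem_Ioi.1 hj))
    rw [cumulant_mul (by simp), cumulant_X_pow, cumulant_geom _ (by omega), Nat.cast_sub h.le,
      zero_add]
    simp [eval_finsetSum, Nat.sub_eq_zero_iff_le, h]
  · intro i _
    rw [eval_prod, prod_ne_zero_iff]
    exact hf i

/-! ### Plane partitions as Gelfand–Tsetlin patterns -/

/-- The strictly increasing row `(0, …, s - 1, s + t, s + 1 + t, …)`, whose first `r + s` entries
form the top row of the patterns corresponding to plane partitions in an `(r,s,t)`-box. -/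
def topRow (s t : ℕ) (i : ℕ) : ℕ := i + if s ≤ i then t else 0

lemma topRow_strictMono (s t : ℕ) : StrictMono (topRow s t) := by
  intro i j h
  unfold topRow
  split_ifs <;> omega

lemma gts_row_mono {n : ℕ} {l : ℕ → ℕ} {g : ℕ → ℕ → ℕ} (hg : g ∈ gts n l) (D k i : ℕ)
    (h : D + k + i < n) : rowCons l g D i ≤ rowCons l g (D + k) i := by
  induction k with
  | zero => simp
  | succ k ih => exact (ih (by omega)).trans ((mem_gts.1 hg).1 (D + k) i (by omega)).1

lemma gts_row_shift {n : ℕ} {l : ℕ → ℕ} {g : ℕ → ℕ → ℕ} (hg : g ∈ gts n l) (D k i : ℕ)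
    (h : D + k + i < n) : rowCons l g (D + k) i + k ≤ rowCons l g D (i + k) := by
  induction k generalizing i with
  | zero => simp
  | succ k ih =>
    have h1 := ((mem_gts.1 hg).1 (D + k) i (by omega)).2
    have h2 := ih (i + 1) (by omega)
    rw [show i + 1 + k = i + (k + 1) by omega] at h2
    change g (D + k) i + (k + 1) ≤ _
    omega

section Box
variable {r s t : ℕ}

/-- A plane partition, extended by zero to all of `ℕ × ℕ`. -/
def extendPP (p : Fin r → Fin s → Fin (t + 1)) (a b : ℕ) : ℕ :=
  if h : a < r ∧ b < s then p ⟨a, h.1⟩ ⟨b, h.2⟩ else 0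

lemma extendPP_le (p : Fin r → Fin s → Fin (t + 1)) (a b : ℕ) : extendPP p a b ≤ t := by
  unfold extendPP
  split_ifs
  · omega
  · omega

lemma extendPP_anti {p : Fin r → Fin s → Fin (t + 1)} (hp : p ∈ PP r s t) {a a' b b' : ℕ}
    (ha : a ≤ a') (hb : b ≤ b') : extendPP p a' b' ≤ extendPP p a b := by
  unfold extendPP
  split_ifs with h1 h2
  · exact (mem_filter.1 hp).2 _ _ _ _ ha hb
  · omega
  · omega
  · omega

/-- The entry of the pattern of `p` at position `i` of row `D` (the top row being `D = 0`), after
subtracting `i`. The entries with `s ≤ i` are forced to be `t` and those with `i + D < s` to be `0`;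
the remaining ones form an `r × s` rectangle that is filled with the parts of `p`. -/
def boxEntry (p : Fin r → Fin s → Fin (t + 1)) (D i : ℕ) : ℕ :=
  if s ≤ i then t else if i + D < s then 0 else extendPP p (r + s - 1 - i - D) (s - 1 - i)

/-- The Gelfand–Tsetlin pattern of a plane partition. -/
def toGT (p : Fin r → Fin s → Fin (t + 1)) (d i : ℕ) : ℕ :=
  if d + i + 1 < r + s then i + boxEntry p (d + 1) i else 0

/-- The plane partition read off from a pattern, inverse to `toGT`. For patterns in
`gts (r + s) (topRow s t)` the truncation `min t` has no effect. -/
def ofGT (r s t : ℕ) (g : ℕ → ℕ → ℕ) (a : Fin r) (b : Fin s) : Fin (t + 1) :=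
  ⟨min t (g (r - 1 - a + b) (s - 1 - b) - (s - 1 - b)), by omega⟩

lemma rowCons_toGT (p : Fin r → Fin s → Fin (t + 1)) {D i : ℕ} (h : D + i < r + s) :
    rowCons (topRow s t) (toGT p) D i = i + boxEntry p D i := by
  cases D with
  | zero =>
    simp only [rowCons, topRow, boxEntry]
    split_ifs <;> omega
  | succ d =>
    simp only [rowCons, toGT]
    rw [if_pos (by omega)]

lemma toGT_mem {p : Fin r → Fin s → Fin (t + 1)} (hp : p ∈ PP r s t) :
    toGT p ∈ gts (r + s) (topRow s t) := by
  refine mem_gts.2 ⟨fun d i h => ?_, fun d i h => ?_⟩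
  · rw [rowCons_toGT p (by omega), rowCons_toGT p (by omega), toGT, if_pos h]
    have h1 : boxEntry p d i ≤ boxEntry p (d + 1) i := by
      unfold boxEntry
      split_ifs
      · omega
      · omega
      · omega
      · omega
      · exact extendPP_anti hp (by omega) le_rfl
    have h2 : boxEntry p (d + 1) i ≤ boxEntry p d (i + 1) := by
      unfold boxEntry
      split_ifs
      all_goals first
        | omega
        | exact extendPP_le _ _ _
        | exact extendPP_anti hp (by omega) (by omega)
    omega
  · rw [toGT, if_neg (by omega)]

/-- Comparing an entry with the top row along both diagonals pins down the entries outside the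
rectangle of `boxEntry` and bounds those inside it. -/
lemma gts_bounds {g : ℕ → ℕ → ℕ} (hg : g ∈ gts (r + s) (topRow s t)) {d i : ℕ}
    (h : d + i + 1 < r + s) :
    topRow s t i ≤ g d i ∧ g d i ≤ i + if s ≤ i + (d + 1) then t else 0 := by
  have h1 := gts_row_mono hg 0 (d + 1) i (by omega)
  have h2 := gts_row_shift hg 0 (d + 1) i (by omega)
  rw [zero_add] at h1 h2
  simp only [rowCons] at h1 h2
  refine ⟨h1, ?_⟩
  unfold topRow at h2
  omega

lemma ofGT_mem {g : ℕ → ℕ → ℕ} (hg : g ∈ gts (r + s) (topRow s t)) : ofGT r s t g ∈ PP r s t := by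
  refine mem_filter.2 ⟨mem_univ _, fun a a' b b' ha hb => ?_⟩
  have ha' : (a : ℕ) ≤ a' := ha
  have hb' : (b : ℕ) ≤ b' := hb
  have h1 := gts_row_mono hg (r - 1 - a' + b' + 1) (a' - a) (s - 1 - b') (by omega)
  have h2 := gts_row_shift hg (r - 1 - a + b + 1) (b' - b) (s - 1 - b') (by omega)
  rw [show r - 1 - (a' : ℕ) + b' + 1 + (a' - a) = r - 1 - a + b' + 1 by omega] at h1
  rw [show r - 1 - (a : ℕ) + b + 1 + (b' - b) = r - 1 - a + b' + 1 by omega,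
    show s - 1 - (b' : ℕ) + (b' - b) = s - 1 - b by omega] at h2
  simp only [rowCons] at h1 h2
  simp only [ofGT]
  omega

lemma ofGT_toGT (p : Fin r → Fin s → Fin (t + 1)) : ofGT r s t (toGT p) = p := by
  funext a b
  apply Fin.ext
  have h1 : r + s - 1 - (s - 1 - (b : ℕ)) - (r - 1 - a + b + 1) = a := by omega
  have h2 : s - 1 - (s - 1 - (b : ℕ)) = b := by omega
  simp only [ofGT, toGT, boxEntry]
  rw [if_pos (by omega), if_neg (by omega), if_neg (by omega), h1, h2]
  simp only [extendPP, a.2, b.2, and_self, dite_true, Fin.eta]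
  omega

lemma toGT_ofGT {g : ℕ → ℕ → ℕ} (hg : g ∈ gts (r + s) (topRow s t)) :
    toGT (ofGT r s t g) = g := by
  funext d i
  by_cases h : d + i + 1 < r + s
  · obtain ⟨h1, h2⟩ := gts_bounds hg h
    rw [toGT, if_pos h, boxEntry]
    unfold topRow at h1
    split_ifs with h3 h4
    · split_ifs at h1 h2 <;> omega
    · split_ifs at h1 h2 <;> omega
    · rw [extendPP, dif_pos (by omega)]
      simp only [ofGT]
      rw [show r - 1 - (r + s - 1 - i - (d + 1)) + (s - 1 - i) = d by omega,
        show s - 1 - (s - 1 - i) = i by omega]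
      split_ifs at h1 h2 <;> omega
  · rw [toGT, if_neg h, (mem_gts.1 hg).2 d i (by omega)]

/-- The weight of the pattern of `p` exceeds the volume of `p` by a constant independent of `p`. -/
lemma wt_toGT (p : Fin r → Fin s → Fin (t + 1)) :
    wt (r + s) (toGT p) = vol p + wt (r + s) fun _ => topRow s t := by
  have h1 : wt (r + s) (toGT p) = ∑ d ∈ range (r + s), ∑ i ∈ range (r + s - 1 - d),
      ((if i < s ∧ s ≤ i + (d + 1) then extendPP p (r + s - 1 - i - (d + 1)) (s - 1 - i) else 0)
        + topRow s t i) := by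
    refine sum_congr rfl fun d hd => sum_congr rfl fun i hi => ?_
    rw [mem_range] at hd hi
    rw [toGT, if_pos (by omega), boxEntry, topRow]
    split_ifs <;> omega
  have h2 : vol p = ∑ y ∈ range r ×ˢ range s, extendPP p y.1 y.2 := by
    rw [sum_product, sum_range]
    refine sum_congr rfl fun a _ => ?_
    rw [sum_range]
    simp [extendPP]
  simp only [h1, sum_add_distrib]
  congr 1
  rw [h2, sum_sigma', ← sum_filter]
  refine sum_bij' (fun x _ => (r + s - 1 - x.2 - (x.1 + 1), s - 1 - x.2))
    (fun y _ => ⟨r - 1 - y.1 + y.2, s - 1 - y.2⟩) ?_ ?_ ?_ ?_ ?_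
  · rintro ⟨d, i⟩ h
    simp only [mem_filter, mem_sigma, mem_range, mem_product] at h ⊢
    omega
  · rintro ⟨a, b⟩ h
    simp only [mem_filter, mem_sigma, mem_range, mem_product] at h ⊢
    omega
  · rintro ⟨d, i⟩ h
    simp only [mem_filter, mem_sigma, mem_range] at h
    simp only [Sigma.mk.injEq, heq_eq_eq]
    omega
  · rintro ⟨a, b⟩ h
    simp only [mem_product, mem_range] at h
    simp only [Prod.mk.injEq]
    omega
  · intro x _; rfl

end Box

/-! ### Variance and mean -/

/-- The volume generating function of the plane partitions in an `(r,s,t)`-box. -/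
noncomputable def ppGF (r s t : ℕ) : ℝ[X] := ∑ p ∈ PP r s t, X ^ vol p

lemma gtGF_topRow (r s t : ℕ) :
    gtGF (r + s) (topRow s t) = ppGF r s t * X ^ wt (r + s) fun _ => topRow s t := by
  rw [gtGF, ppGF, sum_mul]
  symm
  refine sum_bij' (fun p _ => toGT p) (fun g _ => ofGT r s t g) (fun p hp => toGT_mem hp)
    (fun g hg => ofGT_mem hg) (fun p _ => ofGT_toGT p) (fun g hg => toGT_ofGT hg) fun p _ => ?_
  rw [wt_toGT, pow_add]

lemma card_PP_pos (r s t : ℕ) : 0 < (PP r s t).card :=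
  card_pos.2 ⟨fun _ _ => 0, by simp [PP]⟩

lemma eval_ppGF (r s t : ℕ) : eval 1 (ppGF r s t) ≠ 0 := by
  have := (card_PP_pos r s t).ne'
  simpa [ppGF, eval_finsetSum] using this

lemma cumulant_ppGF (r s t : ℕ) : cumulant (ppGF r s t) = varPP r s t := by
  have hc : ((PP r s t).card : ℝ) ≠ 0 := by exact_mod_cast (card_PP_pos r s t).ne'
  rw [ppGF, cumulant_sum, varPP]
  simp only [sub_sq, sum_add_distrib, sum_sub_distrib, ← mul_sum, ← sum_mul, sum_const,
    nsmul_eq_mul, meanPP]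
  field_simp
  ring

lemma varPP_zero (r s : ℕ) : varPP r s 0 = 0 := by
  have hv : ∀ p : Fin r → Fin s → Fin (0 + 1), vol p = 0 := by
    intro p
    simp [vol]
  simp [varPP, meanPP, hv]

/-- MacMahon's box formula in cross-multiplied form: comparing height `t` with height `0` eliminates
`gtConst`. -/
lemma ppGF_relation (r s t : ℕ) :
    ppGF r s t * X ^ (wt (r + s) fun _ => topRow s t) * reducedVandermonde (r + s) (topRow s 0) =
      ppGF r s 0 * X ^ (wt (r + s) fun _ => topRow s 0) *
        reducedVandermonde (r + s) (topRow s t) := by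
  have key : ∀ t, ppGF r s t * X ^ (wt (r + s) fun _ => topRow s t) * gtConst (r + s) =
      (∏ i : Fin (r + s), ∏ _j ∈ Ioi i, (X - 1)) * reducedVandermonde (r + s) (topRow s t) := by
    intro t
    rw [← gtGF_topRow, gtGF_mul_gtConst _ _ fun i _ => (topRow_strictMono s t).monotone i.le_succ,
      det_vandermonde_eq_reduced _ _ (topRow_strictMono s t)]
  have hne : (∏ i : Fin (r + s), ∏ _j ∈ Ioi i, (X - 1) : ℝ[X]) ≠ 0 := by
    simp only [prod_ne_zero_iff]
    exact fun _ _ _ _ => X_sub_C_ne_zero 1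
  apply mul_left_cancel₀ hne
  have h0 := key 0
  have ht := key t
  linear_combination (ppGF r s 0 * X ^ (wt (r + s) fun _ => topRow s 0)) * ht -
    (ppGF r s t * X ^ (wt (r + s) fun _ => topRow s t)) * h0

lemma sum_topRow (r s t : ℕ) :
    ∑ i ∈ range (r + s), (topRow s t i : ℝ) = ∑ i ∈ range (r + s), (i : ℝ) + r * t := by
  rw [add_comm r s, sum_range_add, sum_range_add, sum_congr rfl (g := fun i : ℕ => (i : ℝ))]
  · simp [topRow, sum_add_distrib]
    ring
  · intro i hi
    simp [topRow, mem_range.1 hi]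

lemma sum_topRow_sq (r s t : ℕ) :
    ∑ i ∈ range (r + s), (topRow s t i : ℝ) ^ 2 =
      ∑ i ∈ range (r + s), (i : ℝ) ^ 2 + (r * t ^ 2 + t * r * (2 * s + r - 1)) := by
  have h : ∑ i ∈ range r, (i : ℝ) = r * (r - 1) / 2 := by
    induction r with
    | zero => simp
    | succ k ih => rw [sum_range_succ, ih]; push_cast; ring
  rw [add_comm r s, sum_range_add, sum_range_add, sum_congr rfl (g := fun i : ℕ => (i : ℝ) ^ 2)]
  · simp only [topRow, Nat.le_add_right, if_true, Nat.cast_add, add_sq, sum_add_distrib, sum_const,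
      card_range, nsmul_eq_mul, ← mul_sum, ← sum_mul, h]
    ring
  · intro i hi
    simp [topRow, not_le.2 (mem_range.1 hi)]

theorem varPP_eq (r s t : ℕ) : varPP r s t = r * s * t * (r + s + t) / 12 := by
  have h := congrArg cumulant (ppGF_relation r s t)
  have hX : ∀ k, eval 1 (X ^ k : ℝ[X]) ≠ 0 := fun k => by simp
  have hF : ∀ t k, eval 1 (ppGF r s t * X ^ k) ≠ 0 := fun t k => by
    rw [eval_mul]; exact mul_ne_zero (eval_ppGF r s t) (hX k)
  have hV := fun t => eval_reducedVandermonde_ne_zero (r + s) _ (topRow_strictMono s t)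
  rw [cumulant_mul (hF _ _) (hV _), cumulant_mul (hF _ _) (hV _),
    cumulant_mul (eval_ppGF _ _ _) (hX _), cumulant_mul (eval_ppGF _ _ _) (hX _),
    cumulant_X_pow, cumulant_X_pow, cumulant_ppGF, cumulant_ppGF, varPP_zero,
    cumulant_reducedVandermonde _ _ (topRow_strictMono s t),
    cumulant_reducedVandermonde _ _ (topRow_strictMono s 0),
    sum_topRow, sum_topRow_sq, sum_topRow, sum_topRow_sq] at h
  have hS : ∀ n : ℕ, ∑ i ∈ range n, (i : ℝ) = n * (n - 1) / 2 := by
    intro n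
    induction n with
    | zero => simp
    | succ k ih => rw [sum_range_succ, ih]; push_cast; ring
  rw [hS] at h
  push_cast at h
  linear_combination h

/-- The complement of a plane partition in its box. -/
def complPP {r s t : ℕ} (p : Fin r → Fin s → Fin (t + 1)) (i : Fin r) (j : Fin s) : Fin (t + 1) :=
  (p i.rev j.rev).rev

lemma complPP_mem {r s t : ℕ} {p : Fin r → Fin s → Fin (t + 1)} (hp : p ∈ PP r s t) :
    complPP p ∈ PP r s t := by
  refine mem_filter.2 ⟨mem_univ _, fun i i' j j' hi hj => ?_⟩
  have := (mem_filter.1 hp).2 i'.rev i.rev j'.rev j.rev (Fin.rev_le_rev.2 hi) (Fin.rev_le_rev.2 hj)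
  simp only [complPP, Fin.val_rev]
  omega

lemma vol_complPP {r s t : ℕ} (p : Fin r → Fin s → Fin (t + 1)) :
    (vol (complPP p) : ℝ) = r * s * t - vol p := by
  have h : vol (complPP p) + vol p = r * s * t := by
    have h1 : vol (complPP p) = ∑ i, ∑ j, ((p i j).rev : ℕ) := by
      rw [vol, ← Equiv.sum_comp Fin.revPerm]
      refine sum_congr rfl fun i _ => ?_
      rw [← Equiv.sum_comp Fin.revPerm]
      simp [complPP]
    rw [h1, vol, ← sum_add_distrib]
    simp only [← sum_add_distrib]
    have h2 : ∀ i j, ((p i j).rev : ℕ) + (p i j : ℕ) = t := fun i j => by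
      rw [Fin.val_rev]; omega
    simp only [h2, sum_const, card_univ, Fintype.card_fin, smul_eq_mul, mul_assoc]
  rw [eq_sub_iff_add_eq]
  exact_mod_cast h

lemma meanPP_eq (r s t : ℕ) : meanPP r s t = r * s * t / 2 := by
  have hc : ((PP r s t).card : ℝ) ≠ 0 := by exact_mod_cast (card_PP_pos r s t).ne'
  have hinv : ∀ p : Fin r → Fin s → Fin (t + 1), complPP (complPP p) = p := fun p => by
    funext i j
    simp [complPP]
  have h : ∑ p ∈ PP r s t, (vol p : ℝ) = ∑ p ∈ PP r s t, ((r * s * t : ℝ) - vol p) :=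
    sum_bij' (fun p _ => complPP p) (fun p _ => complPP p) (fun _ hp => complPP_mem hp)
      (fun _ hp => complPP_mem hp) (fun p _ => hinv p) (fun p _ => hinv p)
      (fun p _ => by rw [vol_complPP]; ring)
  rw [sum_sub_distrib, sum_const, nsmul_eq_mul] at h
  rw [meanPP, div_eq_iff hc]
  linarith

/-- For the volume of a uniformly random plane partition in an `(r,s,t)`-box with mean
`μ` and variance `σ²`, one has `(σ/μ)² = (1/3)(1/(st) + 1/(rt) + 1/(rs))`. -/
theorem relative_variance_PP (r s t : ℕ) (hr : 0 < r) (hs : 0 < s) (ht : 0 < t) :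
    varPP r s t / (meanPP r s t) ^ 2 =
      (1 / 3 : ℝ) * (1 / (s * t) + 1 / (r * t) + 1 / (r * s)) := by
  rw [varPP_eq, meanPP_eq]
  have hr' : (r : ℝ) ≠ 0 := by positivity
  have hs' : (s : ℝ) ≠ 0 := by positivity
  have ht' : (t : ℝ) ≠ 0 := by positivity
  field_simp
  ring
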